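/- Let G be a finite simple connected {C₃,C₄}-free graph with at least two vertices. Then (i) Lξᶜ(R(G)) ≥ 2Lξᶜ(G) + 2ξᶜ(L(G)) + 4|E(L(G))|, and (ii) Lξᶜ(R(G)) ≤ 2Lξᶜ(G) + 2M₁(G) − 4|E(G)| + 2ξᶜ(L(G)) + 4|E(L(G))|. -/

import Mathlib

/-!
Both bounds come from an almost exact evaluation of the index of `R(G)`.

Distances.  Between vertices of `G` the distance in `R(G)` is the one in `G` (`r_dist_vv`), since a
detour through a subdivision vertex replaces a single edge.  For edges `e ≠ f` the distance in
`R(G)` is one more than in `L(G)` (`line_dist_lt_r_dist`, `r_dist_ee_le`), and an endpoint of `f` is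
within `dist_L e f + 1` of `e` (`r_dist_ev_le`).  Hence the eccentricity of a vertex `v` of `G` grows
by at most one in passing to `R(G)`, and that of an edge not isolated in `L(G)` is exactly one more
than in `L(G)`.

Second degrees.  Without triangles and 4-cycles, both the vertices of `G` and the subdivision
vertices at distance two from `v` in `R(G)` are in bijection with the paths of length two from `v`,
so `d₂(v|R(G)) = 2 d₂(v|G)` (`deg2_r_vertex`).  Likewise `d₂(e|R(G)) = 2 d₁(e|L(G))`
(`deg2_r_edge`).

So the edges contribute exactly `2ξᶜ(L(G)) + 2 ∑ d₁(e|L(G)) = 2ξᶜ(L(G)) + 4|E(L(G))|`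
(`leapECI_rGraph`), while the vertices contribute between `2Lξᶜ(G)` and
`2Lξᶜ(G) + 2 ∑ d₂(v|G)`.  Counting paths of length two by their middle vertex gives
`∑ d₂(v|G) = M₁(G) - 2|E(G)|` (`sum_twoPaths`).
-/

/-!
Definitions for the leap eccentric connectivity index of graph operations with
subdivided edges (Song–Tang).
-/

open SimpleGraph Finset
open scoped Classical

noncomputable section

instance edgeSetFintypeOfFintype {V : Type*} [Fintype V] (G : SimpleGraph V) :
    Fintype G.edgeSet :=
  Set.Finite.fintype (Set.toFinite _)

/-- Eccentricity `e(v|X)` of a vertex: the maximum distance from `v` to a vertex of `X`. -/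
def ecc {V : Type*} [Fintype V] (X : SimpleGraph V) (v : V) : ℕ :=
  Finset.univ.sup (fun u => X.dist v u)

/-- `d₁(v|X)`: the degree of `v`. -/
def deg1 {V : Type*} [Fintype V] (X : SimpleGraph V) (v : V) : ℕ :=
  (Finset.univ.filter (fun u => X.Adj v u)).card

/-- `d₂(v|X)`: the second degree of `v`, the number of vertices at distance exactly 2. -/
def deg2 {V : Type*} [Fintype V] (X : SimpleGraph V) (v : V) : ℕ :=
  (Finset.univ.filter (fun u => X.dist v u = 2)).card

/-- The leap eccentric connectivity index `Lξᶜ(X) = Σ_v d₂(v|X)·e(v|X)`. -/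
def leapECI {V : Type*} [Fintype V] (X : SimpleGraph V) : ℕ :=
  ∑ v, deg2 X v * ecc X v

/-- The eccentric connectivity index `ξᶜ(X) = Σ_v d₁(v|X)·e(v|X)`. -/
def eci {V : Type*} [Fintype V] (X : SimpleGraph V) : ℕ :=
  ∑ v, deg1 X v * ecc X v

/-- The first Zagreb index `M₁(X) = Σ_v d₁(v|X)²`. -/
def zagrebM1 {V : Type*} [Fintype V] (X : SimpleGraph V) : ℕ :=
  ∑ v, (deg1 X v) ^ 2

/-- The total eccentricity `θ(X) = Σ_v e(v|X)`. -/
def totalEcc {V : Type*} [Fintype V] (X : SimpleGraph V) : ℕ :=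
  ∑ v, ecc X v

/-- The number of edges `|E(X)|`. -/
def numEdges {V : Type*} (X : SimpleGraph V) : ℕ := X.edgeSet.ncard

/-- The line graph `L(G)`, with vertex set `E(G)`: two edges of `G` are adjacent in
`L(G)` iff they are distinct and share an endpoint. -/
def lineG {V : Type*} (G : SimpleGraph V) : SimpleGraph G.edgeSet :=
  SimpleGraph.fromRel (fun e f => ∃ v, v ∈ (e : Sym2 V) ∧ v ∈ (f : Sym2 V))

/-- The subdivision graph `S(G)`, with vertex set `V(G) ⊕ E(G)`:
`v ∈ V(G)` is adjacent to `e ∈ E(G)` iff `v` is an endpoint of `e`; no other edges. -/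
def subdivG {V : Type*} (G : SimpleGraph V) : SimpleGraph (V ⊕ G.edgeSet) :=
  SimpleGraph.fromRel (fun a b => match a, b with
    | Sum.inl v, Sum.inr e => v ∈ (e : Sym2 V)
    | _, _ => False)

/-- The graph `Q(G)`, with vertex set `V(G) ⊕ E(G)`: `v ∈ V(G)` is adjacent to
`e ∈ E(G)` iff `v` is an endpoint of `e`, and distinct `e, e' ∈ E(G)` are adjacent
iff the corresponding edges share an endpoint in `G`. -/
def qGraph {V : Type*} (G : SimpleGraph V) : SimpleGraph (V ⊕ G.edgeSet) :=
  SimpleGraph.fromRel (fun a b => match a, b with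
    | Sum.inl v, Sum.inr e => v ∈ (e : Sym2 V)
    | Sum.inr e, Sum.inr f => ∃ v, v ∈ (e : Sym2 V) ∧ v ∈ (f : Sym2 V)
    | _, _ => False)

/-- The graph `R(G)`, with vertex set `V(G) ⊕ E(G)`: `v, v' ∈ V(G)` are adjacent iff
they are adjacent in `G`, and `v ∈ V(G)` is adjacent to `e ∈ E(G)` iff `v` is an
endpoint of `e`. -/
def rGraph {V : Type*} (G : SimpleGraph V) : SimpleGraph (V ⊕ G.edgeSet) :=
  SimpleGraph.fromRel (fun a b => match a, b with
    | Sum.inl v, Sum.inl w => G.Adj v w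
    | Sum.inl v, Sum.inr e => v ∈ (e : Sym2 V)
    | _, _ => False)

/-- The total graph `T(G)`, with vertex set `V(G) ⊕ E(G)`: adjacency holds iff the
corresponding elements of `G` are adjacent or incident. -/
def tGraph {V : Type*} (G : SimpleGraph V) : SimpleGraph (V ⊕ G.edgeSet) :=
  SimpleGraph.fromRel (fun a b => match a, b with
    | Sum.inl v, Sum.inl w => G.Adj v w
    | Sum.inl v, Sum.inr e => v ∈ (e : Sym2 V)
    | Sum.inr e, Sum.inr f => ∃ v, v ∈ (e : Sym2 V) ∧ v ∈ (f : Sym2 V)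
    | _, _ => False)

/-- `G` is `F`-free: no induced subgraph of `G` is isomorphic to `F`. -/
def fFree {W V : Type*} (F : SimpleGraph W) (G : SimpleGraph V) : Prop :=
  ∀ s : Set V, IsEmpty (F ≃g G.induce s)

/-- The subdivision vertex join `G ∨̇ H`: the disjoint union of `S(G)` and `H`,
joining every original vertex of `G` to every vertex of `H`. -/
def svJoin {V W : Type*} (G : SimpleGraph V) (H : SimpleGraph W) :
    SimpleGraph ((V ⊕ G.edgeSet) ⊕ W) :=
  SimpleGraph.fromRel (fun a b => match a, b with
    | Sum.inl x, Sum.inl y => (subdivG G).Adj x y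
    | Sum.inl (Sum.inl _), Sum.inr _ => True
    | Sum.inr w, Sum.inr w' => H.Adj w w'
    | _, _ => False)

/-- The subdivision edge join `G ⊻ H`: the disjoint union of `S(G)` and `H`,
joining every subdivision vertex to every vertex of `H`. -/
def seJoin {V W : Type*} (G : SimpleGraph V) (H : SimpleGraph W) :
    SimpleGraph ((V ⊕ G.edgeSet) ⊕ W) :=
  SimpleGraph.fromRel (fun a b => match a, b with
    | Sum.inl x, Sum.inl y => (subdivG G).Adj x y
    | Sum.inl (Sum.inr _), Sum.inr _ => True
    | Sum.inr w, Sum.inr w' => H.Adj w w'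
    | _, _ => False)

/-- The subdivision vertex edge join `G^S △ (H₁^V ∨ H₂^S)`: the disjoint union of
`S(G)`, `H₁` and `H₂`, joining every original vertex of `G` to every vertex of `H₁`
and every subdivision vertex to every vertex of `H₂`. -/
def sveJoin {V W₁ W₂ : Type*} (G : SimpleGraph V) (H₁ : SimpleGraph W₁)
    (H₂ : SimpleGraph W₂) : SimpleGraph ((V ⊕ G.edgeSet) ⊕ (W₁ ⊕ W₂)) :=
  SimpleGraph.fromRel (fun a b => match a, b with
    | Sum.inl x, Sum.inl y => (subdivG G).Adj x y
    | Sum.inl (Sum.inl _), Sum.inr (Sum.inl _) => True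
    | Sum.inl (Sum.inr _), Sum.inr (Sum.inr _) => True
    | Sum.inr (Sum.inl w), Sum.inr (Sum.inl w') => H₁.Adj w w'
    | Sum.inr (Sum.inr w), Sum.inr (Sum.inr w') => H₂.Adj w w'
    | _, _ => False)

/-- The double corona of a base graph `B` on `A ⊕ E'` with the graphs `H₁, H₂`:
one copy of `H₁` for each `A`-vertex, joined to it, and one copy of `H₂` for each
`E'`-vertex, joined to it. -/
def doubleCorona {A E' W₁ W₂ : Type*} (B : SimpleGraph (A ⊕ E')) (H₁ : SimpleGraph W₁)
    (H₂ : SimpleGraph W₂) : SimpleGraph ((A ⊕ E') ⊕ (A × W₁ ⊕ E' × W₂)) :=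
  SimpleGraph.fromRel (fun a b => match a, b with
    | Sum.inl x, Sum.inl y => B.Adj x y
    | Sum.inl (Sum.inl v), Sum.inr (Sum.inl p) => v = p.1
    | Sum.inl (Sum.inr e), Sum.inr (Sum.inr p) => e = p.1
    | Sum.inr (Sum.inl p), Sum.inr (Sum.inl q) => p.1 = q.1 ∧ H₁.Adj p.2 q.2
    | Sum.inr (Sum.inr p), Sum.inr (Sum.inr q) => p.1 = q.1 ∧ H₂.Adj p.2 q.2
    | _, _ => False)

/-! ### Adjacency and walks -/

section Adjacency

variable {V : Type*} {G : SimpleGraph V}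

lemma rAdj_vv {v w : V} : (rGraph G).Adj (Sum.inl v) (Sum.inl w) ↔ G.Adj v w := by
  have := fun h : G.Adj v w => h.ne
  have := G.adj_comm v w
  simp only [rGraph, SimpleGraph.fromRel_adj, ne_eq, Sum.inl.injEq]
  tauto

lemma rAdj_ve {v : V} {e : G.edgeSet} :
    (rGraph G).Adj (Sum.inl v) (Sum.inr e) ↔ v ∈ (e : Sym2 V) := by
  simp [rGraph, SimpleGraph.fromRel_adj]

lemma rAdj_ev {v : V} {e : G.edgeSet} :
    (rGraph G).Adj (Sum.inr e) (Sum.inl v) ↔ v ∈ (e : Sym2 V) := by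
  rw [SimpleGraph.adj_comm, rAdj_ve]

lemma rAdj_ee {e f : G.edgeSet} : ¬ (rGraph G).Adj (Sum.inr e) (Sum.inr f) := by
  simp [rGraph, SimpleGraph.fromRel_adj]

lemma lAdj {e f : G.edgeSet} :
    (lineG G).Adj e f ↔ e ≠ f ∧ ∃ v, v ∈ (e : Sym2 V) ∧ v ∈ (f : Sym2 V) := by
  simp only [lineG, SimpleGraph.fromRel_adj]
  refine and_congr_right fun _ => ⟨?_, Or.inl⟩
  rintro (h | ⟨v, h1, h2⟩)
  exacts [h, ⟨v, h2, h1⟩]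

lemma adj_of_mem_edge {e : G.edgeSet} {v w : V} (hv : v ∈ (e : Sym2 V))
    (hw : w ∈ (e : Sym2 V)) (hne : v ≠ w) : G.Adj v w := by
  have h := (Sym2.mem_and_mem_iff hne).1 ⟨hv, hw⟩
  rw [← SimpleGraph.mem_edgeSet, ← h]
  exact e.2

lemma exists_mem_edge (e : G.edgeSet) : ∃ v, v ∈ (e : Sym2 V) :=
  ⟨_, Sym2.out_fst_mem _⟩

/-- The two edges need not be distinct. -/
lemma line_edist_le_one {e f : G.edgeSet} {v : V} (he : v ∈ (e : Sym2 V))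
    (hf : v ∈ (f : Sym2 V)) : (lineG G).edist e f ≤ 1 := by
  rw [SimpleGraph.edist_le_one_iff_adj_or_eq, lAdj]
  by_cases h : e = f
  · exact Or.inr h
  · exact Or.inl ⟨h, v, he, hf⟩

lemma edist_step {W : Type*} {X : SimpleGraph W} {u v w : W} {m k : ℕ}
    (h : X.edist u v ≤ m) (h' : X.edist v w ≤ k) : X.edist u w ≤ ((m + k : ℕ) : ℕ∞) := by
  push_cast
  exact X.edist_triangle.trans (add_le_add h h')

lemma edist_adj {W : Type*} {X : SimpleGraph W} {u v : W} (h : X.Adj u v) :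
    X.edist u v ≤ ((1 : ℕ) : ℕ∞) := by
  rw [SimpleGraph.edist_eq_one_iff_adj.2 h]; rfl

/-- Distance bounds are obtained by propagating an invariant `P n x`, where `n` counts the
steps made so far, along a walk. -/
lemma walk_invariant {W : Type*} {X : SimpleGraph W} (P : ℕ → W → Prop)
    (hs : ∀ n x y, P n x → X.Adj x y → P (n + 1) y) {x y : W} (p : X.Walk x y) :
    ∀ n, P n x → P (n + p.length) y := by
  induction p with
  | nil => intro n h; simpa using h
  | cons h p ih =>
    intro n hn
    have := ih (n + 1) (hs _ _ _ hn h)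
    rw [SimpleGraph.Walk.length_cons]
    convert this using 1
    omega

end Adjacency

/-! ### Distances in `R(G)` against distances in `G` and `L(G)` -/

section Distances

variable {V : Type*} {G : SimpleGraph V}

/-- The inclusion of `G` into `R(G)`. -/
def rHom (G : SimpleGraph V) : G →g rGraph G where
  toFun := Sum.inl
  map_rel' h := rAdj_vv.2 h

lemma r_edist_vv_le (hconn : G.Connected) (u v : V) :
    (rGraph G).edist (Sum.inl u) (Sum.inl v) ≤ G.dist u v := by
  obtain ⟨p, hp⟩ := hconn.exists_walk_length_eq_dist u v
  have := (rGraph G).edist_le (p.map (rHom G))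
  rw [SimpleGraph.Walk.length_map, hp] at this
  exact this

lemma r_connected (hconn : G.Connected) : (rGraph G).Connected := by
  have hv : ∀ u v, (rGraph G).Reachable (Sum.inl u) (Sum.inl v) := fun u v =>
    (hconn.preconnected u v).map (rHom G)
  have he : ∀ e : G.edgeSet, ∃ u, (rGraph G).Reachable (Sum.inr e) (Sum.inl u) := fun e => by
    obtain ⟨u, hu⟩ := exists_mem_edge e
    exact ⟨u, (rAdj_ev.2 hu).reachable⟩
  have hx : ∀ x : V ⊕ G.edgeSet, ∃ u, (rGraph G).Reachable x (Sum.inl u) := by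
    rintro (u | e)
    exacts [⟨u, .rfl⟩, he e]
  have : Nonempty V := hconn.nonempty
  refine ⟨fun x y => ?_⟩
  obtain ⟨u, hu⟩ := hx x
  obtain ⟨v, hv'⟩ := hx y
  exact hu.trans ((hv u v).trans hv'.symm)

lemma dist_le_of_edist {W : Type*} {X : SimpleGraph W} {u v : W} {n : ℕ}
    (h : X.edist u v ≤ n) : X.dist u v ≤ n := by
  rw [SimpleGraph.dist]
  exact ENat.toNat_le_of_le_natCast h

/-- Passing through a subdivision vertex is never shorter than using the edge itself. -/
lemma dist_le_r_dist (hconn : G.Connected) (u v : V) :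
    G.dist u v ≤ (rGraph G).dist (Sum.inl u) (Sum.inl v) := by
  obtain ⟨p, hp⟩ := (r_connected hconn).exists_walk_length_eq_dist (Sum.inl u) (Sum.inl v)
  rw [← hp]
  have key := walk_invariant (X := rGraph G)
    (fun n x => match x with
      | Sum.inl w => G.dist u w ≤ n
      | Sum.inr e => ∀ w ∈ (e : Sym2 V), G.dist u w ≤ n) ?_ p 0 (by simp)
  · simpa using key
  · rintro n (w | e) (w' | e') h hadj
    · have h1 := hconn.dist_triangle (u := u) (v := w) (w := w')
      have h2 := SimpleGraph.dist_eq_one_iff_adj.2 (rAdj_vv.1 hadj)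
      simp only at h ⊢
      omega
    · intro w' hw'
      simp only at h
      by_cases hw : w = w'
      · subst hw; omega
      have h1 := hconn.dist_triangle (u := u) (v := w) (w := w')
      have h2 := SimpleGraph.dist_eq_one_iff_adj.2 (adj_of_mem_edge (rAdj_ve.1 hadj) hw' hw)
      omega
    · exact (h w' (rAdj_ev.1 hadj)).trans (Nat.le_succ n)
    · exact absurd hadj rAdj_ee

lemma r_dist_vv (hconn : G.Connected) (u v : V) :
    (rGraph G).dist (Sum.inl u) (Sum.inl v) = G.dist u v :=
  le_antisymm (dist_le_of_edist (r_edist_vv_le hconn u v)) (dist_le_r_dist hconn u v)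

/-- A walk in `R(G)` that starts at an endpoint of `e` and stands at a vertex `w` of `G` gives a
chain of incident edges from `e` to any edge at `w`: each step between vertices of `G` adds the
edge traversed, and steps through subdivision vertices add nothing more.  Stated with `edist`,
so that it also yields the connectedness of `L(G)`. -/
lemma line_le_of_r_walk {e : G.edgeSet} {x : V ⊕ G.edgeSet} {u : V} (hu : u ∈ (e : Sym2 V))
    (p : (rGraph G).Walk (Sum.inl u) x) :
    match x with
    | Sum.inl w => ∀ f : G.edgeSet, w ∈ (f : Sym2 V) →
        (lineG G).edist e f ≤ ((p.length + 1 : ℕ) : ℕ∞)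
    | Sum.inr f => (lineG G).edist e f ≤ p.length := by
  have key := walk_invariant (X := rGraph G)
    (fun n x => match x with
      | Sum.inl w => ∀ f : G.edgeSet, w ∈ (f : Sym2 V) →
          (lineG G).edist e f ≤ ((n + 1 : ℕ) : ℕ∞)
      | Sum.inr f => (lineG G).edist e f ≤ n) ?_ p 0
      (fun f hf => by simpa using line_edist_le_one hu hf)
  · rcases x with w | f <;> simpa using key
  · rintro n (w | f) (w' | f') h hadj
    · intro f hf
      have hww := rAdj_vv.1 hadj
      exact edist_step (h ⟨s(w, w'), hww⟩ (Sym2.mem_mk_left _ _))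
        (line_edist_le_one (Sym2.mem_mk_right _ _) hf)
    · exact h f' (rAdj_ve.1 hadj)
    · intro f' hf'
      have := edist_step h (line_edist_le_one (rAdj_ev.1 hadj) hf')
      exact this.trans (by gcongr; omega)
    · exact absurd hadj rAdj_ee

lemma line_edist_lt_r_dist (hconn : G.Connected) {e f : G.edgeSet} (hne : e ≠ f) :
    ∃ n : ℕ, (lineG G).edist e f ≤ n ∧ n + 1 = (rGraph G).dist (Sum.inr e) (Sum.inr f) := by
  obtain ⟨p, hp⟩ := (r_connected hconn).exists_walk_length_eq_dist (Sum.inr e) (Sum.inr f)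
  rw [← hp]
  clear hp
  cases p with
  | nil => exact absurd rfl hne
  | @cons _ x _ h p =>
    rcases x with u | g
    · exact ⟨p.length, line_le_of_r_walk (rAdj_ev.1 h) p, rfl⟩
    · exact absurd h rAdj_ee

lemma line_connected (hconn : G.Connected) (e f : G.edgeSet) : (lineG G).Reachable e f := by
  by_cases hne : e = f
  · rw [hne]
  obtain ⟨n, hn, -⟩ := line_edist_lt_r_dist hconn hne
  exact SimpleGraph.reachable_of_edist_ne_top (ne_top_of_le_ne_top (ENat.natCast_ne_top n) hn)

lemma line_dist_lt_r_dist (hconn : G.Connected) {e f : G.edgeSet} (hne : e ≠ f) :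
    (lineG G).dist e f + 1 ≤ (rGraph G).dist (Sum.inr e) (Sum.inr f) := by
  obtain ⟨n, hn, h⟩ := line_edist_lt_r_dist hconn hne
  have := dist_le_of_edist hn
  omega

lemma r_dist_ev_le (hconn : G.Connected) {e f : G.edgeSet} {v : V} (hv : v ∈ (f : Sym2 V)) :
    (rGraph G).dist (Sum.inr e) (Sum.inl v) ≤ (lineG G).dist e f + 1 := by
  obtain ⟨p, hp⟩ := (line_connected hconn e f).exists_walk_length_eq_dist
  rw [← hp]
  have key := walk_invariant (X := lineG G)
    (fun n f => ∀ v ∈ (f : Sym2 V),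
      (rGraph G).edist (Sum.inr e) (Sum.inl v) ≤ ((n + 1 : ℕ) : ℕ∞)) ?_ p 0
      (fun v hv => by simpa using edist_adj (rAdj_ev.2 hv))
  · have := key v hv
    exact dist_le_of_edist (by simpa using this)
  · intro n f g h hadj w hw
    obtain ⟨-, v, hvf, hvg⟩ := lAdj.1 hadj
    by_cases hvw : v = w
    · subst hvw
      exact (h v hvf).trans (by gcongr; omega)
    · exact edist_step (h v hvf) (edist_adj (rAdj_vv.2 (adj_of_mem_edge hvg hw hvw)))

lemma r_dist_ee_le (hconn : G.Connected) (e f : G.edgeSet) :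
    (rGraph G).dist (Sum.inr e) (Sum.inr f) ≤ (lineG G).dist e f + 1 := by
  obtain ⟨p, hp⟩ := (line_connected hconn f e).exists_walk_length_eq_dist
  rw [SimpleGraph.dist_comm (u := e), ← hp]
  clear hp
  cases p with
  | nil => simp
  | @cons _ g _ h p =>
    obtain ⟨-, v, hvf, hvg⟩ := lAdj.1 h
    have h1 := r_dist_ev_le (e := e) hconn hvg
    have h2 := SimpleGraph.dist_eq_one_iff_adj.2 (rAdj_ve.2 hvf)
    have h3 := (r_connected hconn).dist_triangle
      (u := Sum.inr e) (v := Sum.inl v) (w := Sum.inr f)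
    have h4 := SimpleGraph.dist_le p.reverse
    rw [SimpleGraph.Walk.length_reverse] at h4
    rw [SimpleGraph.Walk.length_cons]
    omega

end Distances

/-! ### Eccentricities in `R(G)` -/

section Eccentricity

variable {V : Type*} [Fintype V] {G : SimpleGraph V}

lemma dist_le_ecc {W : Type*} [Fintype W] (X : SimpleGraph W) (u v : W) :
    X.dist u v ≤ ecc X u :=
  Finset.le_sup (f := fun w => X.dist u w) (Finset.mem_univ v)

lemma ecc_le_ecc_r (hconn : G.Connected) (v : V) : ecc G v ≤ ecc (rGraph G) (Sum.inl v) := by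
  refine Finset.sup_le fun w _ => ?_
  rw [← r_dist_vv hconn]
  exact dist_le_ecc _ _ _

lemma ecc_r_le (hconn : G.Connected) (v : V) : ecc (rGraph G) (Sum.inl v) ≤ ecc G v + 1 := by
  refine Finset.sup_le fun x _ => ?_
  rcases x with w | e
  · rw [r_dist_vv hconn]
    exact (dist_le_ecc _ _ _).trans (Nat.le_succ _)
  · obtain ⟨w, hw⟩ := exists_mem_edge e
    have h1 := (r_connected hconn).dist_triangle
      (u := Sum.inl v) (v := Sum.inl w) (w := Sum.inr e)
    have h2 := SimpleGraph.dist_eq_one_iff_adj.2 (rAdj_ve.2 hw)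
    have h3 := dist_le_ecc G v w
    rw [r_dist_vv hconn] at h1
    omega

lemma ecc_r_edge_le (hconn : G.Connected) (hcard : 2 ≤ Fintype.card V) (e : G.edgeSet) :
    ecc (rGraph G) (Sum.inr e) ≤ ecc (lineG G) e + 1 := by
  refine Finset.sup_le fun x _ => ?_
  rcases x with w | f
  · have : Nontrivial V := Fintype.one_lt_card_iff_nontrivial.1 hcard
    obtain ⟨u, hu⟩ := hconn.preconnected.exists_adj_of_nontrivial w
    exact (r_dist_ev_le hconn (f := ⟨s(w, u), hu⟩) (Sym2.mem_mk_left _ _)).trans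
      (Nat.succ_le_succ (dist_le_ecc _ _ _))
  · exact (r_dist_ee_le hconn e f).trans (Nat.succ_le_succ (dist_le_ecc _ _ _))

/-- The neighbour `g` is needed: for `f = e` the inequality `dist e f + 1 ≤ dist_R e f` fails, and
`g` ensures that some `f ≠ e` is available. -/
lemma ecc_line_lt_ecc_r (hconn : G.Connected) {e g : G.edgeSet} (hg : (lineG G).Adj e g) :
    ecc (lineG G) e + 1 ≤ ecc (rGraph G) (Sum.inr e) := by
  suffices h : ecc (lineG G) e ≤ ecc (rGraph G) (Sum.inr e) - 1 by
    have := line_dist_lt_r_dist hconn hg.ne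
    have := dist_le_ecc (rGraph G) (Sum.inr e) (Sum.inr g)
    omega
  refine Finset.sup_le fun f _ => ?_
  by_cases hf : e = f
  · simp [hf]
  · have := line_dist_lt_r_dist hconn hf
    have := dist_le_ecc (rGraph G) (Sum.inr e) (Sum.inr f)
    omega

end Eccentricity

/-! ### Forbidden triangles and 4-cycles -/

section SmallCycles

variable {V : Type*} {G : SimpleGraph V}

lemma no_triangle (hC3 : fFree (SimpleGraph.cycleGraph 3) G) {a b c : V}
    (hab : G.Adj a b) (hbc : G.Adj b c) (hca : G.Adj c a) : False := by
  have hf : Function.Injective ![a, b, c] := by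
    intro i j h
    have := hab.ne; have := hbc.ne; have := hca.ne
    fin_cases i <;> fin_cases j <;> simp_all
  let f : SimpleGraph.cycleGraph 3 ↪g G :=
    { toFun := ![a, b, c]
      inj' := hf
      map_rel_iff' := by
        have := hab.symm; have := hbc.symm; have := hca.symm
        intro i j
        fin_cases i <;> fin_cases j <;>
          simp_all [SimpleGraph.cycleGraph_adj] <;> decide }
  exact (hC3 (Set.range f)).false f.isoInduceRange

/-- A second common neighbour would give a 4-cycle, which is induced because a chord would
create a triangle. -/
lemma common_neighbor_unique (hC3 : fFree (SimpleGraph.cycleGraph 3) G)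
    (hC4 : fFree (SimpleGraph.cycleGraph 4) G) {v a b a' : V} (hva : G.Adj v a)
    (hab : G.Adj a b) (hva' : G.Adj v a') (hab' : G.Adj a' b) (hvb : v ≠ b) : a = a' := by
  by_contra hne
  have h1 : ¬ G.Adj v b := fun h => no_triangle hC3 hva hab h.symm
  have h2 : ¬ G.Adj a a' := fun h => no_triangle hC3 hva h hva'.symm
  have h1' : ¬ G.Adj b v := fun h => h1 h.symm
  have h2' : ¬ G.Adj a' a := fun h => h2 h.symm
  have hf : Function.Injective ![v, a, b, a'] := by
    intro i j h
    have := hva.ne; have := hab.ne; have := hva'.ne; have := hab'.ne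
    fin_cases i <;> fin_cases j <;> simp_all
  let f : SimpleGraph.cycleGraph 4 ↪g G :=
    { toFun := ![v, a, b, a']
      inj' := hf
      map_rel_iff' := by
        have := hva.symm; have := hab.symm; have := hva'.symm; have := hab'.symm
        intro i j
        fin_cases i <;> fin_cases j <;>
          simp_all [SimpleGraph.cycleGraph_adj] <;> decide }
  exact (hC4 (Set.range f)).false f.isoInduceRange

end SmallCycles

/-! ### Second degrees in `R(G)` -/

section SecondDegree

variable {V : Type*} [Fintype V] {G : SimpleGraph V}

lemma dist_eq_two_iff_of_connected {W : Type*} {X : SimpleGraph W} (h : X.Connected)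
    {u v : W} : X.dist u v = 2 ↔ u ≠ v ∧ ¬ X.Adj u v ∧ ∃ w, X.Adj u w ∧ X.Adj w v := by
  have h1 := (h.preconnected u v).coe_dist_eq_edist
  have h2 : X.dist u v = 2 ↔ X.edist u v = 2 := by
    rw [← h1]; norm_cast
  rw [h2, SimpleGraph.edist_eq_two_iff]
  simp only [Set.Nonempty, SimpleGraph.mem_commonNeighbors, X.adj_comm v]

lemma deg2_sum {A B : Type*} [Fintype A] [Fintype B] (X : SimpleGraph (A ⊕ B)) (x : A ⊕ B) :
    deg2 X x = (univ.filter fun a : A => X.dist x (Sum.inl a) = 2).card +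
      (univ.filter fun b : B => X.dist x (Sum.inr b) = 2).card := by
  simp only [deg2, Finset.card_filter, Fintype.sum_sum_type]

/-- The paths `v ~ a ~ b` of length two starting at `v`, recorded as the pairs `(a, b)`. -/
def twoPaths (G : SimpleGraph V) (v : V) : Finset (V × V) :=
  univ.filter fun p => G.Adj v p.1 ∧ G.Adj p.1 p.2 ∧ p.2 ≠ v

lemma mem_twoPaths {v : V} {p : V × V} :
    p ∈ twoPaths G v ↔ G.Adj v p.1 ∧ G.Adj p.1 p.2 ∧ p.2 ≠ v := by
  simp [twoPaths]

/-- With no triangles the end of a two-path is at distance two, and with no 4-cycles either its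
middle vertex is determined by its ends. -/
lemma card_twoPaths_eq_deg2 (hconn : G.Connected)
    (hC3 : fFree (SimpleGraph.cycleGraph 3) G) (hC4 : fFree (SimpleGraph.cycleGraph 4) G)
    (v : V) : (twoPaths G v).card = deg2 G v := by
  refine Finset.card_bij (fun p _ => p.2) ?_ ?_ ?_
  · rintro ⟨a, b⟩ h
    obtain ⟨h1, h2, h3⟩ := mem_twoPaths.1 h
    simp only [mem_filter, mem_univ, true_and, dist_eq_two_iff_of_connected hconn]
    exact ⟨h3.symm, fun h => no_triangle hC3 h1 h2 h.symm, a, h1, h2⟩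
  · rintro ⟨a, b⟩ h ⟨a', b'⟩ h' (rfl : b = b')
    obtain ⟨h1, h2, h3⟩ := mem_twoPaths.1 h
    obtain ⟨h1', h2', -⟩ := mem_twoPaths.1 h'
    exact Prod.ext (common_neighbor_unique hC3 hC4 h1 h2 h1' h2' h3.symm) rfl
  · intro b hb
    simp only [mem_filter, mem_univ, true_and, dist_eq_two_iff_of_connected hconn] at hb
    obtain ⟨h1, -, a, h2, h3⟩ := hb
    exact ⟨(a, b), mem_twoPaths.2 ⟨h2, h3, h1.symm⟩, rfl⟩

lemma r_dist_ve_eq_two_iff {V : Type*} {G : SimpleGraph V} (hconn : G.Connected) {v : V} {e : G.edgeSet} :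
    (rGraph G).dist (Sum.inl v) (Sum.inr e) = 2 ↔
      v ∉ (e : Sym2 V) ∧ ∃ a, G.Adj v a ∧ a ∈ (e : Sym2 V) := by
  rw [dist_eq_two_iff_of_connected (r_connected hconn)]
  simp [Sum.exists, rAdj_vv, rAdj_ve, rAdj_ee]

/-- The subdivision vertices at distance two from `v` are the last edges of the two-paths
from `v`; an edge is not the last edge of two of them since there are no triangles. -/
lemma card_twoPaths_eq_edges (hconn : G.Connected)
    (hC3 : fFree (SimpleGraph.cycleGraph 3) G) (v : V) :
    (twoPaths G v).card =
      (univ.filter fun e : G.edgeSet =>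
        (rGraph G).dist (Sum.inl v) (Sum.inr e) = 2).card := by
  refine Finset.card_bij
    (fun p hp => (⟨s(p.1, p.2), (mem_twoPaths.1 hp).2.1⟩ : G.edgeSet)) ?_ ?_ ?_
  · rintro ⟨a, b⟩ h
    obtain ⟨h1, h2, h3⟩ := mem_twoPaths.1 h
    simp only [mem_filter, mem_univ, true_and, r_dist_ve_eq_two_iff hconn, Sym2.mem_iff]
    refine ⟨?_, a, h1, Or.inl rfl⟩
    rintro (h | h)
    exacts [h1.ne h, h3 h.symm]
  · rintro ⟨a, b⟩ h ⟨a', b'⟩ h' heq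
    obtain ⟨h1, h2, h3⟩ := mem_twoPaths.1 h
    obtain ⟨h1', h2', -⟩ := mem_twoPaths.1 h'
    have heq := Sym2.eq_iff.1 (Subtype.ext_iff.1 heq)
    rcases heq with ⟨rfl, rfl⟩ | ⟨rfl, rfl⟩
    · rfl
    · exact (no_triangle hC3 h1 h2 h1'.symm).elim
  · intro e he
    simp only [mem_filter, mem_univ, true_and, r_dist_ve_eq_two_iff hconn] at he
    obtain ⟨hv, a, hva, hae⟩ := he
    obtain ⟨b, hb⟩ := Sym2.mem_iff_exists.1 hae
    have hab : G.Adj a b := by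
      rw [← SimpleGraph.mem_edgeSet, ← hb]; exact e.2
    refine ⟨(a, b), mem_twoPaths.2 ⟨hva, hab, ?_⟩, Subtype.ext hb.symm⟩
    rintro rfl
    exact hv (hb ▸ Sym2.mem_mk_right _ _)

lemma deg2_r_vertex (hconn : G.Connected)
    (hC3 : fFree (SimpleGraph.cycleGraph 3) G) (hC4 : fFree (SimpleGraph.cycleGraph 4) G)
    (v : V) : deg2 (rGraph G) (Sum.inl v) = 2 * deg2 G v := by
  rw [deg2_sum, ← card_twoPaths_eq_edges hconn hC3, card_twoPaths_eq_deg2 hconn hC3 hC4,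
    two_mul]
  simp only [r_dist_vv hconn, deg2]

lemma card_r_ee_two (hconn : G.Connected) (e : G.edgeSet) :
    (univ.filter fun f : G.edgeSet =>
      (rGraph G).dist (Sum.inr e) (Sum.inr f) = 2).card = deg1 (lineG G) e := by
  unfold deg1
  congr 1
  ext f
  simp only [mem_filter, mem_univ, true_and]
  rw [dist_eq_two_iff_of_connected (r_connected hconn), lAdj]
  simp [Sum.exists, rAdj_ev, rAdj_ve, rAdj_ee]

/-- The pairs `(x, v)` with `x` an endpoint of `e` and `v ∉ e` a neighbour of `x`: the
edges `xv` other than `e` that meet `e`, together with their endpoint on `e`. -/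
def pendants (G : SimpleGraph V) (e : G.edgeSet) : Finset (V × V) :=
  univ.filter fun p => p.1 ∈ (e : Sym2 V) ∧ p.2 ∉ (e : Sym2 V) ∧ G.Adj p.1 p.2

lemma mem_pendants {e : G.edgeSet} {p : V × V} :
    p ∈ pendants G e ↔ p.1 ∈ (e : Sym2 V) ∧ p.2 ∉ (e : Sym2 V) ∧ G.Adj p.1 p.2 := by
  simp [pendants]

/-- The outer endpoint determines the pendant pair: two edges from it to both endpoints of `e`
would close a triangle. -/
lemma card_pendants_eq_vertices (hconn : G.Connected)
    (hC3 : fFree (SimpleGraph.cycleGraph 3) G) (e : G.edgeSet) :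
    (pendants G e).card =
      (univ.filter fun v : V => (rGraph G).dist (Sum.inr e) (Sum.inl v) = 2).card := by
  refine Finset.card_bij (fun p _ => p.2) ?_ ?_ ?_
  · rintro ⟨x, v⟩ h
    obtain ⟨h1, h2, h3⟩ := mem_pendants.1 h
    simp only [mem_filter, mem_univ, true_and]
    rw [SimpleGraph.dist_comm, r_dist_ve_eq_two_iff hconn]
    exact ⟨h2, x, h3.symm, h1⟩
  · rintro ⟨x, v⟩ h ⟨x', v'⟩ h' (rfl : v = v')
    obtain ⟨h1, h2, h3⟩ := mem_pendants.1 h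
    obtain ⟨h1', h2', h3'⟩ := mem_pendants.1 h'
    by_cases hx : x = x'
    · rw [hx]
    · exact (no_triangle hC3 h3.symm (adj_of_mem_edge h1 h1' hx) h3').elim
  · intro v hv
    simp only [mem_filter, mem_univ, true_and] at hv
    rw [SimpleGraph.dist_comm, r_dist_ve_eq_two_iff hconn] at hv
    obtain ⟨h1, x, h2, h3⟩ := hv
    exact ⟨(x, v), mem_pendants.2 ⟨h3, h1, h2.symm⟩, rfl⟩

lemma card_pendants_eq_line_degree (e : G.edgeSet) :
    (pendants G e).card = deg1 (lineG G) e := by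
  refine Finset.card_bij
    (fun p hp => (⟨s(p.1, p.2), (mem_pendants.1 hp).2.2⟩ : G.edgeSet)) ?_ ?_ ?_
  · rintro ⟨x, v⟩ h
    obtain ⟨h1, h2, h3⟩ := mem_pendants.1 h
    simp only [mem_filter, mem_univ, true_and, lAdj]
    refine ⟨?_, x, h1, Sym2.mem_mk_left _ _⟩
    intro he
    exact h2 (by rw [he]; exact Sym2.mem_mk_right _ _)
  · rintro ⟨x, v⟩ h ⟨x', v'⟩ h' heq
    obtain ⟨h1, h2, h3⟩ := mem_pendants.1 h
    obtain ⟨h1', h2', h3'⟩ := mem_pendants.1 h'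
    have heq := Sym2.eq_iff.1 (Subtype.ext_iff.1 heq)
    rcases heq with ⟨rfl, rfl⟩ | ⟨rfl, rfl⟩
    · rfl
    · exact absurd h1 h2'
  · intro f hf
    simp only [mem_filter, mem_univ, true_and, lAdj] at hf
    obtain ⟨hne, x, hxe, hxf⟩ := hf
    obtain ⟨v, hv⟩ := Sym2.mem_iff_exists.1 hxf
    have hxv : G.Adj x v := by
      rw [← SimpleGraph.mem_edgeSet, ← hv]; exact f.2
    refine ⟨(x, v), mem_pendants.2 ⟨hxe, fun hve => hne (Subtype.ext ?_), hxv⟩,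
      Subtype.ext hv.symm⟩
    rw [hv]
    exact (Sym2.mem_and_mem_iff hxv.ne).1 ⟨hxe, hve⟩

lemma deg2_r_edge (hconn : G.Connected) (hC3 : fFree (SimpleGraph.cycleGraph 3) G)
    (e : G.edgeSet) : deg2 (rGraph G) (Sum.inr e) = 2 * deg1 (lineG G) e := by
  rw [deg2_sum, ← card_pendants_eq_vertices hconn hC3, card_pendants_eq_line_degree,
    card_r_ee_two hconn, two_mul]

end SecondDegree

/-! ### Degree sums and the index of `R(G)` -/

section Sums

variable {V : Type*} [Fintype V] {G : SimpleGraph V}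

lemma sum_deg1 {W : Type*} [Fintype W] (X : SimpleGraph W) :
    ∑ v, deg1 X v = 2 * numEdges X := by
  have h : ∑ v, X.degree v = 2 * X.edgeFinset.card := by
    convert X.sum_degrees_eq_twice_card_edges
  rw [numEdges, ← SimpleGraph.coe_edgeFinset, Set.ncard_coe_finset]
  refine Eq.trans ?_ h
  refine Finset.sum_congr rfl fun v _ => ?_
  rw [← SimpleGraph.card_neighborFinset_eq_degree, SimpleGraph.neighborFinset_eq_filter, deg1]

/-- Walks `v ~ a ~ b` split into the two-paths from `v` and the walks returning to `v`. -/
lemma card_twoPaths_add_deg1 (v : V) :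
    (twoPaths G v).card + deg1 G v = ∑ a, if G.Adj v a then deg1 G a else 0 := by
  simp only [twoPaths, deg1, Finset.card_filter, Fintype.sum_prod_type,
    ← Finset.sum_add_distrib]
  refine Finset.sum_congr rfl fun a _ => ?_
  by_cases h : G.Adj v a
  · have h1 : (∑ b, if b = v then 1 else 0) = 1 := by simp
    simp only [h, true_and, if_true]
    rw [← h1, ← Finset.sum_add_distrib]
    refine Finset.sum_congr rfl fun b _ => ?_
    by_cases hb : b = v
    · subst hb; simp [h.symm]
    · simp [hb]
  · simp [h]

lemma sum_twoPaths :
    ∑ v, (twoPaths G v).card + 2 * numEdges G = zagrebM1 G := by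
  rw [← sum_deg1, ← Finset.sum_add_distrib]
  simp only [card_twoPaths_add_deg1]
  rw [Finset.sum_comm]
  refine Finset.sum_congr rfl fun a _ => ?_
  rw [← Finset.sum_filter, Finset.sum_const, smul_eq_mul, sq]
  simp only [deg1, G.adj_comm a]

/-- The edge part of the index is exact: `e` has second degree twice its degree in `L(G)`, and
eccentricity one more than in `L(G)` unless `e` is isolated there, when its term vanishes. -/
lemma leapECI_rGraph (hconn : G.Connected) (hcard : 2 ≤ Fintype.card V)
    (hC3 : fFree (SimpleGraph.cycleGraph 3) G)
    (hC4 : fFree (SimpleGraph.cycleGraph 4) G) :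
    leapECI (rGraph G) = 2 * ∑ v, deg2 G v * ecc (rGraph G) (Sum.inl v) +
      (2 * eci (lineG G) + 4 * numEdges (lineG G)) := by
  have hE : ∀ e : G.edgeSet, deg2 (rGraph G) (Sum.inr e) * ecc (rGraph G) (Sum.inr e) =
      2 * (deg1 (lineG G) e * ecc (lineG G) e) + 2 * deg1 (lineG G) e := by
    intro e
    rw [deg2_r_edge hconn hC3]
    rcases Nat.eq_zero_or_pos (deg1 (lineG G) e) with h0 | hpos
    · simp [h0]
    · obtain ⟨g, hg⟩ := Finset.card_pos.1 hpos
      have hecc := le_antisymm (ecc_r_edge_le hconn hcard e)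
        (ecc_line_lt_ecc_r hconn (Finset.mem_filter.1 hg).2)
      rw [hecc]
      ring
  have h4 : 4 * numEdges (lineG G) = 2 * ∑ e, deg1 (lineG G) e := by
    rw [sum_deg1]; ring
  rw [leapECI, Fintype.sum_sum_type, h4, eci]
  simp only [hE, deg2_r_vertex hconn hC3 hC4, Finset.sum_add_distrib, Finset.mul_sum, mul_assoc]

end Sums

theorem rGraph_leapECI_bounds {V : Type*} [Fintype V] (G : SimpleGraph V)
    (hconn : G.Connected) (hcard : 2 ≤ Fintype.card V)
    (hC3 : fFree (SimpleGraph.cycleGraph 3) G)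
    (hC4 : fFree (SimpleGraph.cycleGraph 4) G) :
    2 * leapECI G + 2 * eci (lineG G) + 4 * numEdges (lineG G) ≤ leapECI (rGraph G) ∧
    (leapECI (rGraph G) : ℤ) ≤
      2 * (leapECI G : ℤ) + 2 * (zagrebM1 G : ℤ) - 4 * (numEdges G : ℤ) +
        2 * (eci (lineG G) : ℤ) + 4 * (numEdges (lineG G) : ℤ) := by
  have hR := leapECI_rGraph hconn hcard hC3 hC4
  have hlow : leapECI G ≤ ∑ v, deg2 G v * ecc (rGraph G) (Sum.inl v) :=
    Finset.sum_le_sum fun v _ => Nat.mul_le_mul_left _ (ecc_le_ecc_r hconn v)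
  have hup : ∑ v, deg2 G v * ecc (rGraph G) (Sum.inl v) ≤ leapECI G + ∑ v, deg2 G v := by
    rw [leapECI, ← Finset.sum_add_distrib]
    exact Finset.sum_le_sum fun v _ => Nat.mul_le_mul_left _ (ecc_r_le hconn v)
  have hM : ∑ v, deg2 G v + 2 * numEdges G = zagrebM1 G := by
    rw [← sum_twoPaths]
    simp only [card_twoPaths_eq_deg2 hconn hC3 hC4]
  omega
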